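/- arXiv:1809.10907 — 3 statements merged into one kernel-verified Lean document; each statement's English description precedes it below -/
import Mathlib

section
/- Let k ≥ 0 be an even integer, and let M_k(Γ) and S_k(Γ) denote the complex vector spaces of modular forms and cusp forms of weight k for Γ = SL₂(ℤ). Then dim M_k(Γ) = ⌊k/12⌋ if k ≡ 2 (mod 12) and dim M_k(Γ) = ⌊k/12⌋ + 1 otherwise; and dim S_k(Γ) = 0 if k < 12, dim S_k(Γ) = ⌊k/12⌋ − 1 if k ≥ 12 and k ≡ 2 (mod 12), and dim S_k(Γ) = ⌊k/12⌋ if k ≥ 12 and k ≢ 2 (mod 12). -/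
/-!
The discriminant `Δ` is a cusp form of weight `12` without zeros on the upper half-plane and with a
simple zero at the cusp, so division by `Δ` identifies `S_k` with `M_{k - 12}`. For even `k ≥ 4` the
Eisenstein series of weight `k` spans `M_k / S_k`, whence `dim M_k = 1 + dim M_{k - 12}`. The
formula for `M_k` follows by induction from `M_0 = ℂ`, `M_2 = 0` and the vanishing of `M_k` for
`k < 0`, and the one for `S_k` by shifting the weight by `12`.
-/

open scoped MatrixGroups

section LevelCongr

variable {G H : Subgroup (GL (Fin 2) ℝ)} [G.HasDetOne] [H.HasDetOne]

theorem rank_modularForm_congr (h : G = H) (k : ℤ) :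
    Module.rank ℂ (ModularForm G k) = Module.rank ℂ (ModularForm H k) := by
  subst h
  rfl

theorem rank_cuspForm_congr (h : G = H) (k : ℤ) :
    Module.rank ℂ (CuspForm G k) = Module.rank ℂ (CuspForm H k) := by
  subst h
  rfl

end LevelCongr

theorem rank_modularForm_top_eq_levelOne (k : ℤ) :
    Module.rank ℂ (ModularForm (⊤ : Subgroup SL(2, ℤ)) k) = Module.rank ℂ (ModularForm 𝒮ℒ k) :=
  rank_modularForm_congr (MonoidHom.range_eq_map _).symm k

theorem rank_cuspForm_top_eq_levelOne (k : ℤ) :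
    Module.rank ℂ (CuspForm (⊤ : Subgroup SL(2, ℤ)) k) = Module.rank ℂ (CuspForm 𝒮ℒ k) :=
  rank_cuspForm_congr (MonoidHom.range_eq_map _).symm k

theorem rank_modularForm_levelOne_of_mod_twelve_eq_two {k : ℕ} (h : k % 12 = 2) :
    Module.rank ℂ (ModularForm 𝒮ℒ (k : ℤ)) = (k / 12 : ℕ) := by
  have hk : Even k := Nat.even_iff.mpr (by lia)
  rw [ModularForm.dimension_level_one k hk, if_pos (c := k ≡ 2 [MOD 12]) h]

theorem rank_modularForm_levelOne_of_mod_twelve_ne_two {k : ℕ} (hk : Even k) (h : k % 12 ≠ 2) :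
    Module.rank ℂ (ModularForm 𝒮ℒ (k : ℤ)) = (k / 12 + 1 : ℕ) := by
  rw [ModularForm.dimension_level_one k hk, if_neg (c := k ≡ 2 [MOD 12]) h]

theorem rank_cuspForm_levelOne_eq_rank_modularForm_sub_twelve {k : ℕ} (h : 12 ≤ k) :
    Module.rank ℂ (CuspForm 𝒮ℒ (k : ℤ)) =
      Module.rank ℂ (ModularForm 𝒮ℒ ((k - 12 : ℕ) : ℤ)) := by
  rw [CuspForm.discriminantEquiv.rank_eq, Nat.cast_sub h, Nat.cast_ofNat]

theorem rank_cuspForm_levelOne_of_mod_twelve_eq_two {k : ℕ} (hk12 : 12 ≤ k) (h : k % 12 = 2) :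
    Module.rank ℂ (CuspForm 𝒮ℒ (k : ℤ)) = (k / 12 - 1 : ℕ) := by
  rw [rank_cuspForm_levelOne_eq_rank_modularForm_sub_twelve hk12,
    rank_modularForm_levelOne_of_mod_twelve_eq_two (by lia),
    show (k - 12) / 12 = k / 12 - 1 by lia]

theorem rank_cuspForm_levelOne_of_mod_twelve_ne_two {k : ℕ} (hk : Even k) (hk12 : 12 ≤ k)
    (h : k % 12 ≠ 2) :
    Module.rank ℂ (CuspForm 𝒮ℒ (k : ℤ)) = (k / 12 : ℕ) := by
  have hk' : Even (k - 12) := hk.tsub (by decide)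
  rw [rank_cuspForm_levelOne_eq_rank_modularForm_sub_twelve hk12,
    rank_modularForm_levelOne_of_mod_twelve_ne_two hk' (by lia),
    show (k - 12) / 12 + 1 = k / 12 by lia]

/-- Dimension formulas for the spaces `M_k(Γ)` of modular forms and `S_k(Γ)` of cusp forms of
even weight `k ≥ 0` on `Γ = SL₂(ℤ)`:
`dim M_k = ⌊k/12⌋` if `k ≡ 2 (mod 12)` and `⌊k/12⌋ + 1` otherwise;
`dim S_k = 0` if `k < 12`, `⌊k/12⌋ − 1` if `k ≥ 12`, `k ≡ 2 (mod 12)`, and `⌊k/12⌋` if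
`k ≥ 12`, `k ≢ 2 (mod 12)`. -/
theorem dim_modularForms_cuspForms (k : ℕ) (hk : Even k) :
    (k % 12 = 2 → Module.rank ℂ (ModularForm (⊤ : Subgroup SL(2, ℤ)) (k : ℤ)) = (k / 12 : ℕ)) ∧
    (k % 12 ≠ 2 →
      Module.rank ℂ (ModularForm (⊤ : Subgroup SL(2, ℤ)) (k : ℤ)) = (k / 12 + 1 : ℕ)) ∧
    (k < 12 → Module.rank ℂ (CuspForm (⊤ : Subgroup SL(2, ℤ)) (k : ℤ)) = 0) ∧
    (12 ≤ k → k % 12 = 2 →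
      Module.rank ℂ (CuspForm (⊤ : Subgroup SL(2, ℤ)) (k : ℤ)) = (k / 12 - 1 : ℕ)) ∧
    (12 ≤ k → k % 12 ≠ 2 →
      Module.rank ℂ (CuspForm (⊤ : Subgroup SL(2, ℤ)) (k : ℤ)) = (k / 12 : ℕ)) := by
  rw [rank_modularForm_top_eq_levelOne, rank_cuspForm_top_eq_levelOne]
  exact ⟨rank_modularForm_levelOne_of_mod_twelve_eq_two,
    rank_modularForm_levelOne_of_mod_twelve_ne_two hk,
    fun h ↦ CuspForm.rank_eq_zero_of_weight_lt_twelve (mod_cast h),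
    rank_cuspForm_levelOne_of_mod_twelve_eq_two,
    rank_cuspForm_levelOne_of_mod_twelve_ne_two hk⟩
end

section
/- For every τ in the upper half-plane, the Dedekind eta function satisfies η(−1/τ) = (τ/i)^{1/2}·η(τ), where (τ/i)^{1/2} denotes the principal branch of the square root. -/
open Complex UpperHalfPlane

/-- The Dedekind eta function `η(τ) = e^{2πiτ/24}·∏_{n≥1}(1 − q^n)` with `q = e^{2πiτ}`. -/
noncomputable def dedekindEta (τ : UpperHalfPlane) : ℂ :=
  Complex.exp (2 * (Real.pi : ℂ) * Complex.I * (τ : ℂ) / 24) *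
    ∏' n : ℕ, (1 - Complex.exp (2 * (Real.pi : ℂ) * Complex.I * (τ : ℂ)) ^ (n + 1))

/-- `−1/τ` lies in the upper half-plane when `τ` does. -/
theorem neg_inv_mem_upperHalfPlane (τ : UpperHalfPlane) : 0 < (-1 / (τ : ℂ)).im := by
  rw [neg_div, Complex.neg_im, one_div, Complex.inv_im, neg_div, neg_neg]
  exact div_pos τ.2 (Complex.normSq_pos.mpr (UpperHalfPlane.ne_zero τ))

/-!
`η(−1/τ)` and `√τ · η(τ)` have the same logarithmic derivative on the connected upper half-plane,
by the transformation law of `E₂` under `τ ↦ −1/τ`, hence they are proportional; the fixed point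
`τ = i` shows that the constant is `1/√i`. In the upper half-plane `arg τ − arg i` lies between
`−π/2` and `π/2`, so `√τ / √i = √(τ/i)` for the principal branches.
-/

theorem log_div_of_arg_sub_mem_Ioc {x y : ℂ} (hx : x ≠ 0) (hy : y ≠ 0)
    (h : arg x - arg y ∈ Set.Ioc (-Real.pi) Real.pi) : log (x / y) = log x - log y := by
  have h_exp : exp (log x - log y) = x / y := by rw [exp_sub, exp_log hx, exp_log hy]
  have h_im : (log x - log y).im = arg x - arg y := by rw [sub_im, log_im, log_im]
  rw [← h_exp, log_exp (h_im ▸ h.1) (h_im ▸ h.2)]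

theorem div_cpow_of_arg_sub_mem_Ioc {x y : ℂ}
    (h : arg x - arg y ∈ Set.Ioc (-Real.pi) Real.pi) (c : ℂ) : (x / y) ^ c = x ^ c / y ^ c := by
  rcases eq_or_ne c 0 with rfl | hc
  · simp
  rcases eq_or_ne x 0 with rfl | hx
  · simp [hc]
  rcases eq_or_ne y 0 with rfl | hy
  · simp [hc]
  rw [cpow_def_of_ne_zero (div_ne_zero hx hy), cpow_def_of_ne_zero hx, cpow_def_of_ne_zero hy,
    log_div_of_arg_sub_mem_Ioc hx hy h, sub_mul, exp_sub]

theorem div_I_cpow {z : ℂ} (hz : -(Real.pi / 2) < arg z) (c : ℂ) :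
    (z / Complex.I) ^ c = z ^ c / Complex.I ^ c := by
  refine div_cpow_of_arg_sub_mem_Ioc ?_ c
  rw [arg_I]
  constructor <;> linarith [arg_le_pi z, Real.pi_pos]

theorem dedekindEta_eq_eta (τ : UpperHalfPlane) : dedekindEta τ = ModularForm.eta τ := by
  simp only [dedekindEta, ModularForm.eta, ModularForm.eta_q_eq_pow, Function.Periodic.qParam,
    ofReal_ofNat]

/-- `η(−1/τ) = (τ/i)^{1/2}·η(τ)`, with the principal branch of the square root
(given by the principal branch of `Complex.cpow`). -/
theorem dedekindEta_functional_equation (τ : UpperHalfPlane) :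
    dedekindEta ⟨-1 / (τ : ℂ), neg_inv_mem_upperHalfPlane τ⟩ =
      ((τ : ℂ) / Complex.I) ^ (1 / 2 : ℂ) * dedekindEta τ := by
  have h_sqrt : ((τ : ℂ) / Complex.I) ^ (1 / 2 : ℂ) = sqrt τ / sqrt Complex.I := by
    rw [one_div]
    exact div_I_cpow (neg_pi_div_two_lt_arg_iff.mpr (.inr τ.im_pos.le)) _
  calc dedekindEta ⟨-1 / (τ : ℂ), neg_inv_mem_upperHalfPlane τ⟩
      = ModularForm.eta (-1 / τ) := dedekindEta_eq_eta _
    _ = (sqrt Complex.I)⁻¹ * (sqrt τ * ModularForm.eta τ) :=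
      ModularForm.eta_comp_eq_csqrt_I_inv τ.im_pos
    _ = ((τ : ℂ) / Complex.I) ^ (1 / 2 : ℂ) * dedekindEta τ := by
      rw [h_sqrt, dedekindEta_eq_eta]
      ring
end

section
/- Let F be a cusp form of weight k for SL₂(ℤ) with Fourier expansion F(τ) = ∑_{n≥1} a(n)·q^n, and let L(F,s) = ∑_{n≥1} a(n)·n^{−s}. Then there is an entire function Λ: ℂ → ℂ, given by Λ(s) = ∫₁^∞ F(it)·(t^{s−1} + i^k·t^{k−1−s}) dt, such that Λ(s) = (2π)^{−s}·Γ(s)·L(F,s) for all s with Re(s) > k/2 + 1 (so L(F,s) has holomorphic continuation to all of ℂ), and Λ satisfies the functional equation Λ(k−s) = i^{−k}·Λ(s) for all s ∈ ℂ. -/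
open Complex UpperHalfPlane MeasureTheory

open scoped MatrixGroups

/-- The extension by `0` of a function on the upper half-plane to all of `ℂ`. -/
noncomputable def extendByZero (F : UpperHalfPlane → ℂ) : ℂ → ℂ := fun z =>
  if h : 0 < z.im then F ⟨z, h⟩ else 0

/-- The completed `L`-function `Λ(s) = ∫₁^∞ F(it)·(t^{s−1} + i^k·t^{k−1−s}) dt`. -/
noncomputable def completedL (k : ℤ) (F : UpperHalfPlane → ℂ) (s : ℂ) : ℂ :=
  ∫ t in Set.Ioi (1 : ℝ),
    extendByZero F ((t : ℂ) * Complex.I) *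
      ((t : ℂ) ^ (s - 1) + Complex.I ^ k * (t : ℂ) ^ ((k : ℂ) - 1 - s))

/-!
The Mellin transform of `t ↦ F(it)` converges for every `s`, because `F` decays rapidly towards
both cusps `i∞` and `0`; integrating the `q`-expansion term by term gives `(2π)^{-s} Γ(s) L(F, s)`.
Cutting the integral at the fixed point `t = 1` of `t ↦ 1/t` and folding `(0, 1)` onto `(1, ∞)`
with `F(i/t) = i^k t^k F(it)` turns it into the integral defining `completedL`. Exchanging `s` and
`k - s` multiplies the Mellin transform by `i^k`; doing so twice shows that `i^k` may be replaced by
`i^{-k}`.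
-/

open Set Filter
open scoped Topology Manifold
open Function.Periodic (qParam)

section Mellin

variable {E : Type*} [NormedAddCommGroup E] [NormedSpace ℂ E]

theorem mellin_indicator {S : Set ℝ} (hS : MeasurableSet S) (hS₀ : S ⊆ Ioi 0) (f : ℝ → E)
    (s : ℂ) : mellin (S.indicator f) s = ∫ t in S, (t : ℂ) ^ (s - 1) • f t := by
  simp_rw [mellin, ← indicator_smul S (fun t : ℝ ↦ (t : ℂ) ^ (s - 1)) f]
  rw [setIntegral_indicator hS, inter_eq_right.mpr hS₀]

theorem setIntegral_Ioo_zero_one_cpow_smul (f : ℝ → E) (s : ℂ) :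
    ∫ t in Ioo (0 : ℝ) 1, (t : ℂ) ^ (s - 1) • f t =
      ∫ t in Ioi (1 : ℝ), (t : ℂ) ^ (-s - 1) • f t⁻¹ := by
  rw [← mellin_indicator measurableSet_Ioo Ioo_subset_Ioi_self,
    ← mellin_indicator measurableSet_Ioi (Ioi_subset_Ioi zero_le_one) (fun t ↦ f t⁻¹),
    ← mellin_comp_inv]
  refine setIntegral_congr_fun measurableSet_Ioi fun t (ht : 0 < t) ↦ ?_
  simp only [indicator, mem_Ioo, mem_Ioi, ht, true_and, one_lt_inv₀ ht, inv_inv]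

theorem mellin_eq_setIntegral_Ioi_one_add {f : ℝ → E} {s : ℂ} (hf : MellinConvergent f s) :
    mellin f s = (∫ t in Ioi (1 : ℝ), (t : ℂ) ^ (s - 1) • f t) +
      ∫ t in Ioi (1 : ℝ), (t : ℂ) ^ (-s - 1) • f t⁻¹ := by
  rw [← setIntegral_Ioo_zero_one_cpow_smul, mellin, ← Ioc_union_Ioi_eq_Ioi zero_le_one,
    setIntegral_union Ioc_disjoint_Ioi_same measurableSet_Ioi (hf.mono_set Ioc_subset_Ioi_self)
      (hf.mono_set (Ioi_subset_Ioi zero_le_one)),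
    integral_Ioc_eq_integral_Ioo, add_comm]

theorem strongFEPair_Λ_eq_setIntegral_Ioi_one {P : WeakFEPair E} (hP : IsStrongFEPair P) (s : ℂ) :
    P.Λ s = ∫ t in Ioi (1 : ℝ),
      ((t : ℂ) ^ (s - 1) • P.f t + (P.ε * (t : ℂ) ^ (P.k - 1 - s)) • P.g t) := by
  have reflect (t : ℝ) (ht : t ∈ Ioi (1 : ℝ)) :
      (t : ℂ) ^ (-s - 1) • P.f t⁻¹ = (P.ε * (t : ℂ) ^ (P.k - 1 - s)) • P.g t := by
    have ht₀ : 0 < t := zero_lt_one.trans ht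
    rw [← one_div, P.h_feq t ht₀, smul_smul, ofReal_cpow ht₀.le, mul_left_comm,
      ← cpow_add _ _ (ofReal_ne_zero.mpr ht₀.ne')]
    ring_nf
  have integrable_f := (hP.hasMellin s).1.mono_set (Ioi_subset_Ioi zero_le_one)
  have integrable_g : IntegrableOn
      (fun t : ℝ ↦ (P.ε * (t : ℂ) ^ (P.k - 1 - s)) • P.g t) (Ioi 1) := by
    have := ((hP.symm.hasMellin (P.k - s)).1.mono_set (Ioi_subset_Ioi zero_le_one)).smul P.ε
    refine IntegrableOn.congr_fun this (fun t _ ↦ ?_) measurableSet_Ioi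
    simp only [Pi.smul_apply, smul_smul, sub_right_comm]
    rfl
  rw [hP.Λ_eq, mellin_eq_setIntegral_Ioi_one_add (hP.hasMellin s).1,
    setIntegral_congr_fun measurableSet_Ioi reflect, ← integral_add integrable_f integrable_g]

end Mellin

section Series

theorem tsum_succ_eq_tsum {E : Type*} [AddCommMonoid E] [TopologicalSpace E] {g : ℕ → E}
    (hg : g 0 = 0) : ∑' n, g (n + 1) = ∑' n, g n :=
  (add_left_injective 1).tsum_eq fun _ hn ↦
    Nat.range_succ ▸ Nat.pos_of_ne_zero fun h ↦ hn (h ▸ hg)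

theorem LSeries_eq_tsum_succ (a : ℕ → ℂ) (s : ℂ) :
    LSeries a s = ∑' n : ℕ, a (n + 1) * ((n + 1 : ℕ) : ℂ) ^ (-s) := by
  rw [LSeries, ← tsum_succ_eq_tsum (LSeries.term_zero a s)]
  exact tsum_congr fun n ↦ by rw [LSeries.term_of_ne_zero n.succ_ne_zero, cpow_neg, div_eq_mul_inv]

theorem summable_mul_pow_of_LSeriesSummable {a : ℕ → ℂ} {s : ℂ} (ha : LSeriesSummable a s)
    {q : ℂ} (hq : ‖q‖ < 1) : Summable fun n ↦ a n * q ^ n := by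
  obtain ⟨m, hm⟩ := exists_nat_ge s.re
  have growth : a =O[atTop] fun n ↦ (n : ℝ) ^ m :=
    ha.isBigO_rpow.trans <| .of_norm_eventuallyLE <| by
      filter_upwards [eventually_ge_atTop 1] with n hn
      rw [Real.norm_of_nonneg (by positivity), ← Real.rpow_natCast]
      exact Real.rpow_le_rpow_of_exponent_le (mod_cast hn) hm
  refine summable_of_isBigO_nat (summable_pow_mul_geometric_of_norm_lt_one m (r := ‖q‖) (by simpa))
    (growth.mul (.of_norm_right <| .of_norm_left ?_))
  simpa using Asymptotics.isBigO_refl _ _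

end Series

section ModularForms

variable {Γ : Subgroup (GL (Fin 2) ℝ)} {k : ℤ} {F : Type*} [FunLike F ℍ ℂ]

theorem translate_eq_self [ModularFormClass F Γ k] {γ : GL (Fin 2) ℝ} (hγ : γ ∈ Γ) (f : F) :
    ⇑(ModularForm.translate f γ) = f := by
  rw [ModularForm.coe_translate, SlashInvariantFormClass.slash_action_eq f γ hγ]

section qExpansion

variable {h : ℝ} {a : ℕ → ℂ}

theorem eq_zero_of_forall_im_lt {f : ℍ → ℂ} (hf : MDiff f) {y : ℝ} (hy : 0 < y)
    (hfy : ∀ z : ℍ, z.im < y → f z = 0) : f = 0 := by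
  obtain ⟨z₀, hz₀⟩ : ∃ z₀ : ℍ, z₀.im < y := ⟨⟨⟨0, y / 2⟩, half_pos hy⟩, half_lt_self hy⟩
  have near : ∀ᶠ z in 𝓝[≠] z₀, f z = 0 :=
    eventually_nhdsWithin_of_eventually_nhds <|
      (UpperHalfPlane.continuous_im.continuousAt.eventually_lt_const hz₀).mono hfy
  exact eq_zero_of_frequently hf near.frequently

theorem eq_zero_of_not_summable_qParam (hh : 0 < h) {f : ℍ → ℂ} (hf : MDiff f)
    (hfa : ∀ τ : ℍ, f τ = ∑' n, a n * qParam h τ ^ n) {τ : ℍ}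
    (hτ : ¬ Summable fun n ↦ a n * qParam h τ ^ n) : f = 0 := by
  refine eq_zero_of_forall_im_lt hf τ.im_pos fun z hz ↦ ?_
  rw [hfa z]
  refine tsum_eq_zero_of_not_summable fun hsum ↦ hτ (.of_norm_bounded hsum.norm fun n ↦ ?_)
  have norm_lt : ‖qParam h τ‖ < ‖qParam h z‖ := by
    rw [Function.Periodic.norm_qParam h z]
    exact (Function.Periodic.norm_qParam_lt_iff hh z.im τ).mpr hz
  simp only [norm_mul, norm_pow]
  gcongr

-- A divergent `∑'` is `0`: if the series for `f τ` diverges, then `f` vanishes below `Im τ`, hence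
-- everywhere, while `a` grows too fast for its Dirichlet series to converge at any `s`.
theorem LSeries_eq_LSeries_qExpansion_coeff [ModularFormClass F Γ k] (hh : 0 < h)
    (hΓ : h ∈ Γ.strictPeriods) {f : F}
    (hf : ∀ τ : ℍ, f τ = ∑' n, a n * qParam h τ ^ n) (s : ℂ) :
    LSeries a s = LSeries (fun n ↦ (qExpansion h f).coeff n) s := by
  by_cases hsum : ∀ τ : ℍ, Summable fun n ↦ a n * qParam h τ ^ n
  · have coeff_eq := ModularFormClass.qExpansion_coeff_unique hh hΓ (f := f) (k := k) (c := a)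
      fun τ ↦ hf τ ▸ (hsum τ).hasSum
    simp only [← coeff_eq]
  · obtain ⟨τ, hτ⟩ := not_forall.mp hsum
    have not_summable : ¬ LSeriesSummable a s := fun ha ↦
      hτ (summable_mul_pow_of_LSeriesSummable ha (Function.Periodic.norm_qParam_lt_one hh τ.im_pos))
    rw [eq_zero_of_not_summable_qParam hh (ModularFormClass.holo f) hf hτ, qExpansion_zero, LSeries,
      tsum_eq_zero_of_not_summable not_summable]
    simp only [map_zero]
    exact congrFun LSeries_zero.symm s

end qExpansion

section CuspForms

theorem coe_eq_zero_of_weight_nonpos [Γ.IsArithmetic] [CuspFormClass F Γ k] (hk : k ≤ 0)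
    (f : F) : ⇑f = 0 := by
  rcases hk.lt_or_eq with hneg | rfl
  · exact congrArg DFunLike.coe <|
      ModularForm.isZero_of_neg_weight hneg (ModularFormClass.modularForm (Γ := Γ) f)
  · obtain ⟨c, hc⟩ :=
      ModularForm.eq_const_of_weight_zero (ModularFormClass.modularForm (Γ := Γ) f)
    have hf : ⇑f = Function.const ℍ c := hc
    have tendsto_zero : Tendsto f atImInfty (𝓝 0) := CuspFormClass.zero_at_infty (Γ := Γ) f
    rw [hf] at tendsto_zero ⊢
    rw [tendsto_const_nhds_iff.mp tendsto_zero]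
    rfl

variable [Γ.IsArithmetic] [CuspFormClass F Γ k]

theorem extendByZero_eq_ofComplex (f : ℍ → ℂ) {z : ℂ} (hz : 0 < z.im) :
    extendByZero f z = f (ofComplex z) := by
  rw [extendByZero, dif_pos hz, ofComplex_apply_of_im_pos hz]

theorem completedL_zero (k : ℤ) : completedL k (0 : ℍ → ℂ) = 0 := by
  ext s
  simp [completedL, extendByZero]

theorem weakFEPair_g_eq_f (hS : (ModularGroup.S : GL (Fin 2) ℝ) ∈ Γ) (hk : 0 < k) (f : F) :
    (ModularForm.weakFEPair hk f).g = (ModularForm.weakFEPair hk f).f := by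
  ext t
  simp only [ModularForm.weakFEPair]
  rw [translate_eq_self (k := k) hS f]

theorem completedL_eq_Λ (hS : (ModularGroup.S : GL (Fin 2) ℝ) ∈ Γ) (hk : 0 < k) (f : F) :
    completedL k f = ModularForm.Λ hk f := by
  ext s
  rw [ModularForm.Λ, strongFEPair_Λ_eq_setIntegral_Ioi_one (CuspForm.isStrongFEPair hk f),
    weakFEPair_g_eq_f hS hk f, completedL]
  refine setIntegral_congr_fun measurableSet_Ioi fun t (ht : 1 < t) ↦ ?_
  have im_pos : 0 < ((t : ℂ) * Complex.I).im := by simpa using zero_lt_one.trans ht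
  simp only [extendByZero_eq_ofComplex f im_pos, ModularForm.weakFEPair, smul_eq_mul,
    ofReal_intCast, mul_comm Complex.I]
  ring

theorem differentiable_completedL (hS : (ModularGroup.S : GL (Fin 2) ℝ) ∈ Γ) (f : F) :
    Differentiable ℂ (completedL k f) := by
  rcases le_or_gt k 0 with hk | hk
  · rw [coe_eq_zero_of_weight_nonpos (Γ := Γ) hk f, completedL_zero]
    exact differentiable_const 0
  · rw [completedL_eq_Λ hS hk f]
    exact CuspForm.differentiable_Λ hk f

theorem Λ_eq_Gamma_mul_LSeries (hk : 0 < k) (f : F) {s : ℂ} (hs : (k : ℝ) / 2 + 1 < s.re) :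
    ModularForm.Λ hk f s = (2 * (Real.pi : ℂ) / Γ.strictWidthInfty) ^ (-s) * Complex.Gamma s *
      LSeries (fun n ↦ (qExpansion Γ.strictWidthInfty f).coeff n) s := by
  have re_pos : 0 < s.re := by linarith [show (0 : ℝ) < k from mod_cast hk]
  have s_ne_zero : s ≠ 0 := by rintro rfl; simp at re_pos
  have hL : LSeries (fun n ↦ (qExpansion Γ.strictWidthInfty f).coeff n) s =
      Γ.strictWidthInfty ^ (-s) * ModularForm.L hk f s := by
    rw [← (CuspForm.hasSum_L hk f hs).tsum_eq]
    refine tsum_congr fun n ↦ ?_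
    rcases eq_or_ne n 0 with rfl | hn
    · simp [s_ne_zero]
    · exact LSeries.term_of_ne_zero hn _ s
  have width_pos := Γ.strictWidthInfty_pos
  have factor : (2 * (Real.pi : ℂ) / Γ.strictWidthInfty) ^ (-s) * Γ.strictWidthInfty ^ (-s) =
      (2 * (Real.pi : ℂ)) ^ (-s) := by
    rw [← ofReal_ofNat, ← ofReal_mul, div_cpow_ofReal_nonneg (by positivity) width_pos.le,
      div_mul_cancel₀ _ (by simp [width_pos.ne'])]
  have gamma_ne_zero : Complex.Gamma s ≠ 0 := Gamma_ne_zero_of_re_pos re_pos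
  calc ModularForm.Λ hk f s
      = (2 * (Real.pi : ℂ)) ^ (-s) * Complex.Gamma s * ModularForm.L hk f s := by
        rw [ModularForm.L, Gammaℂ_def]
        field_simp
    _ = _ := by
        rw [hL, ← factor]
        ring

theorem completedL_eq_Gamma_mul_LSeries (hS : (ModularGroup.S : GL (Fin 2) ℝ) ∈ Γ) (f : F) {s : ℂ}
    (hs : (k : ℝ) / 2 + 1 < s.re) :
    completedL k f s = (2 * (Real.pi : ℂ) / Γ.strictWidthInfty) ^ (-s) * Complex.Gamma s *
      LSeries (fun n ↦ (qExpansion Γ.strictWidthInfty f).coeff n) s := by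
  rcases le_or_gt k 0 with hk | hk
  · rw [coe_eq_zero_of_weight_nonpos (Γ := Γ) hk f, completedL_zero, qExpansion_zero]
    simp [← Pi.zero_def, LSeries_zero]
  · rw [completedL_eq_Λ hS hk f, Λ_eq_Gamma_mul_LSeries hk f hs]

theorem Λ_weight_sub (hS : (ModularGroup.S : GL (Fin 2) ℝ) ∈ Γ) (hk : 0 < k) (f : F) (s : ℂ) :
    ModularForm.Λ hk f (k - s) = Complex.I ^ k * ModularForm.Λ hk f s := by
  have h := (ModularForm.weakFEPair hk f).functional_equation s
  rw [(CuspForm.isStrongFEPair hk f).symm_Λ_eq, weakFEPair_g_eq_f hS hk f,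
    ← (CuspForm.isStrongFEPair hk f).Λ_eq] at h
  simpa [ModularForm.Λ] using h

theorem completedL_weight_sub (hS : (ModularGroup.S : GL (Fin 2) ℝ) ∈ Γ) (f : F) (s : ℂ) :
    completedL k f (k - s) = Complex.I ^ (-k) * completedL k f s := by
  rcases le_or_gt k 0 with hk | hk
  · rw [coe_eq_zero_of_weight_nonpos (Γ := Γ) hk f, completedL_zero]
    simp
  · have reflected := Λ_weight_sub hS hk f (k - s)
    rw [sub_sub_cancel] at reflected
    rw [completedL_eq_Λ hS hk f, reflected, ← mul_assoc, ← zpow_add₀ I_ne_zero,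
      neg_add_cancel, zpow_zero, one_mul]

end CuspForms

theorem cuspform_functional_equation_general [Γ.IsArithmetic] [CuspFormClass F Γ k]
    (hS : (ModularGroup.S : GL (Fin 2) ℝ) ∈ Γ) (f : F) (a : ℕ → ℂ)
    (hf : ∀ τ : ℍ, f τ = ∑' n, a n * qParam Γ.strictWidthInfty τ ^ n) :
    Differentiable ℂ (completedL k f) ∧
    (∀ s : ℂ, (k : ℝ) / 2 + 1 < s.re →
      completedL k f s =
        (2 * (Real.pi : ℂ) / Γ.strictWidthInfty) ^ (-s) * Complex.Gamma s * LSeries a s) ∧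
    (∀ s : ℂ, completedL k f (k - s) = Complex.I ^ (-k) * completedL k f s) := by
  refine ⟨differentiable_completedL hS f, fun s hs ↦ ?_, completedL_weight_sub hS f⟩
  rw [completedL_eq_Gamma_mul_LSeries hS f hs, LSeries_eq_LSeries_qExpansion_coeff (k := k)
    Γ.strictWidthInfty_pos Γ.strictWidthInfty_mem_strictPeriods hf]

end ModularForms

/-- If `F` is a cusp form of weight `k` for `SL₂(ℤ)` with Fourier coefficients `a(n)` and
`L(F,s) = ∑_{n≥1} a(n) n^{−s}`, then `Λ(s) = ∫₁^∞ F(it)(t^{s−1} + i^k t^{k−1−s}) dt` is entire,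
agrees with `(2π)^{−s}·Γ(s)·L(F,s)` for `Re s > k/2 + 1` (giving the holomorphic continuation
of `L(F,s)` to all of `ℂ`), and satisfies the functional equation `Λ(k−s) = i^{−k}·Λ(s)`. -/
theorem cuspform_functional_equation (k : ℤ)
    (F : CuspForm (⊤ : Subgroup SL(2, ℤ)) k) (a : ℕ → ℂ)
    (hF : ∀ τ : UpperHalfPlane,
      F τ = ∑' n : ℕ, a (n + 1) *
        Complex.exp (2 * (Real.pi : ℂ) * Complex.I * (τ : ℂ)) ^ (n + 1)) :
    Differentiable ℂ (completedL k F) ∧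
    (∀ s : ℂ, (k : ℝ) / 2 + 1 < s.re →
      completedL k F s =
        (2 * (Real.pi : ℂ)) ^ (-s) * Complex.Gamma s *
          ∑' n : ℕ, a (n + 1) * ((n + 1 : ℕ) : ℂ) ^ (-s)) ∧
    (∀ s : ℂ, completedL k F ((k : ℂ) - s) = Complex.I ^ (-k) * completedL k F s) := by
  have hS : (ModularGroup.S : GL (Fin 2) ℝ) ∈ ((⊤ : Subgroup SL(2, ℤ)) : Subgroup (GL (Fin 2) ℝ)) :=
    Subgroup.mem_map_of_mem _ (Subgroup.mem_top _)
  have width : ((⊤ : Subgroup SL(2, ℤ)) : Subgroup (GL (Fin 2) ℝ)).strictWidthInfty = 1 := by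
    rw [← MonoidHom.range_eq_map, Subgroup.strictWidthInfty_SL2Z]
  have expansion (τ : ℍ) : F τ = ∑' n, Function.update a 0 0 n * qParam 1 τ ^ n := by
    rw [hF, ← tsum_succ_eq_tsum (g := fun n ↦ Function.update a 0 0 n * _) (by simp)]
    simp [qParam]
  simpa [width, LSeries_eq_tsum_succ] using
    cuspform_functional_equation_general hS F (Function.update a 0 0) (by rwa [width])
end
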